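/- For every integer n ≥ 3, the cycle graph C_n on n vertices satisfies χ_ssc(C_n) = 1 if n is divisible by 3, and χ_ssc(C_n) = 2 otherwise. -/

import Mathlib

open SimpleGraph

/-- The closed neighbourhood of `v` in `G`. -/
def closedNbhd {V : Type*} (G : SimpleGraph V) (v : V) : Set V :=
  {u | u = v ∨ G.Adj v u}

/-- `c` is a `q`-subset square colouring of `G`: colours `1, …, q` are real colours and
colour `0` means "uncoloured"; every closed neighbourhood contains a coloured vertex, and
no nonzero colour appears on two distinct vertices of a closed neighbourhood. -/
def IsSubsetSquareColouring {V : Type*} (G : SimpleGraph V) (q : ℕ) (c : V → ℕ) : Prop :=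
  (∀ v, c v ≤ q) ∧
  (∀ v, ∃ u ∈ closedNbhd G v, c u ≠ 0) ∧
  (∀ v i, 1 ≤ i → i ≤ q →
    ∀ u ∈ closedNbhd G v, ∀ w ∈ closedNbhd G v, c u = i → c w = i → u = w)

/-- The subset square chromatic number `χ_ssc G`. -/
noncomputable def sscNum {V : Type*} (G : SimpleGraph V) : ℕ :=
  sInf {q | ∃ c : V → ℕ, IsSubsetSquareColouring G q c}

/-!
A `1`-subset square colouring selects a perfect code: every closed neighbourhood contains exactly
one coloured vertex. In a `d`-regular graph closed neighbourhoods have `d + 1` elements, so counting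
the pairs (vertex, coloured vertex in its closed neighbourhood) forces `d + 1` to divide the number
of vertices; for cycles, `3 ∣ n`. Conversely, colour every third vertex of the cycle; when `3 ∤ n`
only the last coloured vertex is too close to the first one, and a second colour separates them.
-/

section ClosedNbhd

variable {V : Type*} {G : SimpleGraph V} {u v : V}

theorem mem_closedNbhd_comm : u ∈ closedNbhd G v ↔ v ∈ closedNbhd G u :=
  or_congr eq_comm (G.adj_comm v u)

theorem closedNbhd_eq_insert_neighborSet (v : V) :
    closedNbhd G v = insert v (G.neighborSet v) :=
  rfl

theorem ncard_closedNbhd (v : V) [Fintype (G.neighborSet v)] :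
    (closedNbhd G v).ncard = G.degree v + 1 := by
  rw [closedNbhd_eq_insert_neighborSet, Set.ncard_insert_of_notMem G.notMem_neighborSet_self,
    Set.ncard_eq_toFinset_card', Set.toFinset_card, card_neighborSet_eq_degree]

end ClosedNbhd

section Colouring

variable {V : Type*} {G : SimpleGraph V} {q : ℕ} {c : V → ℕ}

theorem isSubsetSquareColouring_iff :
    IsSubsetSquareColouring G q c ↔
      (∀ v, c v ≤ q) ∧ (∀ v, ∃ u ∈ closedNbhd G v, c u ≠ 0) ∧
        ∀ v, ∀ u ∈ closedNbhd G v, ∀ w ∈ closedNbhd G v, c u ≠ 0 → c u = c w → u = w := by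
  refine and_congr_right fun le_q ↦ and_congr_right fun _ ↦ forall_congr' fun v ↦ ?_
  constructor
  · intro inj u hu w hw hcu hcuw
    exact inj (c u) (Nat.one_le_iff_ne_zero.2 hcu) (le_q u) u hu w hw rfl hcuw.symm
  · rintro inj i hi - u hu w hw rfl hcwu
    exact inj u hu w hw (Nat.one_le_iff_ne_zero.1 hi) hcwu.symm

namespace IsSubsetSquareColouring

theorem of_le {r : ℕ} (hc : IsSubsetSquareColouring G q c) (hr : ∀ v, c v ≤ r) :
    IsSubsetSquareColouring G r c :=
  isSubsetSquareColouring_iff.2 ⟨hr, (isSubsetSquareColouring_iff.1 hc).2⟩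

theorem sscNum_le (hc : IsSubsetSquareColouring G q c) : sscNum G ≤ q :=
  Nat.sInf_le ⟨c, hc⟩

theorem pos [Nonempty V] (hc : IsSubsetSquareColouring G q c) : 0 < q := by
  obtain ⟨u, -, hu⟩ := hc.2.1 (Classical.arbitrary V)
  exact (Nat.pos_of_ne_zero hu).trans_le (hc.1 u)

theorem existsUnique_coloured_mem_closedNbhd (hc : IsSubsetSquareColouring G 1 c) (v : V) :
    ∃! u, u ∈ closedNbhd G v ∧ c u ≠ 0 := by
  obtain ⟨le_one, dominating, inj⟩ := isSubsetSquareColouring_iff.1 hc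
  have eq_one {u : V} (hu : c u ≠ 0) : c u = 1 :=
    (le_one u).antisymm (Nat.one_le_iff_ne_zero.2 hu)
  obtain ⟨u, hu, hcu⟩ := dominating v
  refine ⟨u, ⟨hu, hcu⟩, fun w ⟨hw, hcw⟩ ↦ ?_⟩
  exact inj v w hw u hu hcw ((eq_one hcw).trans (eq_one hcu).symm)

theorem card_eq_card_coloured_mul [Fintype V] [G.LocallyFinite] {d : ℕ}
    (hc : IsSubsetSquareColouring G 1 c) (hG : G.IsRegularOfDegree d) :
    Fintype.card V = Finset.card {u | c u ≠ 0} * (d + 1) := by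
  classical
  rw [← Finset.card_univ, ← mul_one (Finset.card _)]
  refine Finset.card_mul_eq_card_mul (fun v u ↦ u ∈ closedNbhd G v) (fun v _ ↦ ?_) fun u _ ↦ ?_
  · rw [Finset.bipartiteAbove, Finset.filter_filter, Finset.card_eq_one_iff_existsUnique]
    simpa [and_comm] using hc.existsUnique_coloured_mem_closedNbhd v
  · rw [Finset.bipartiteBelow, ← hG u, ← ncard_closedNbhd, ← Set.ncard_coe_finset]
    simp [mem_closedNbhd_comm (u := u)]

end IsSubsetSquareColouring

theorem exists_isSubsetSquareColouring [Finite V] (G : SimpleGraph V) :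
    ∃ q c, IsSubsetSquareColouring G q c := by
  obtain ⟨n, ⟨e⟩⟩ := Finite.exists_equiv_fin V
  refine ⟨n, fun v ↦ e v + 1, isSubsetSquareColouring_iff.2
    ⟨fun v ↦ (e v).isLt, fun v ↦ ⟨v, .inl rfl, Nat.succ_ne_zero _⟩, ?_⟩⟩
  intro _ u _ w _ _ huw
  exact e.injective (Fin.ext (Nat.succ_injective huw))

theorem exists_isSubsetSquareColouring_sscNum [Finite V] (G : SimpleGraph V) :
    ∃ c, IsSubsetSquareColouring G (sscNum G) c :=
  Nat.sInf_mem (exists_isSubsetSquareColouring G)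

theorem sscNum_pos [Finite V] [Nonempty V] (G : SimpleGraph V) : 0 < sscNum G :=
  let ⟨_, hc⟩ := exists_isSubsetSquareColouring_sscNum G
  hc.pos

theorem degree_add_one_dvd_card_of_sscNum_eq_one [Fintype V] [G.LocallyFinite] {d : ℕ}
    (hG : G.IsRegularOfDegree d) (h : sscNum G = 1) : d + 1 ∣ Fintype.card V := by
  obtain ⟨c, hc⟩ := exists_isSubsetSquareColouring_sscNum G
  rw [h] at hc
  exact Dvd.intro_left _ (hc.card_eq_card_coloured_mul hG).symm

end Colouring

section CycleGraph

variable {n : ℕ}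

theorem isRegularOfDegree_cycleGraph (hn : 3 ≤ n) : (cycleGraph n).IsRegularOfDegree 2 := by
  obtain ⟨m, rfl⟩ := Nat.exists_eq_add_of_le' hn
  exact fun _ ↦ cycleGraph_degree_three_le

theorem mem_closedNbhd_cycleGraph_iff_val {u v : Fin n} :
    u ∈ closedNbhd (cycleGraph n) v ↔
      (u : ℕ) = v ∨ (u : ℕ) = v + 1 ∨ (v : ℕ) = u + 1 ∨
        ((u : ℕ) = 0 ∧ (v : ℕ) + 1 = n) ∨ ((v : ℕ) = 0 ∧ (u : ℕ) + 1 = n) := by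
  rw [closedNbhd, Set.mem_ofPred_eq, cycleGraph_adj', Fin.ext_iff]
  rcases lt_trichotomy u v with h | rfl | h
  · rw [Fin.coe_sub_iff_le.2 h.le, Fin.coe_sub_iff_lt.2 h]
    omega
  · simp
  · rw [Fin.coe_sub_iff_le.2 h.le, Fin.coe_sub_iff_lt.2 h]
    omega

/-- The colouring of the cycle on `n` vertices that colours every third vertex, starting at `0`,
with `1`, except that a coloured vertex among the last two receives `2`: going round the end of the
cycle, it would be within distance two of vertex `0`. -/
def everyThirdColouring (n : ℕ) (v : Fin n) : ℕ :=
  if 3 ∣ (v : ℕ) then if (v : ℕ) + 2 < n then 1 else 2 else 0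

theorem everyThirdColouring_ne_zero {v : Fin n} :
    everyThirdColouring n v ≠ 0 ↔ 3 ∣ (v : ℕ) := by
  unfold everyThirdColouring
  split_ifs <;> simp_all

theorem everyThirdColouring_le_two (v : Fin n) : everyThirdColouring n v ≤ 2 := by
  unfold everyThirdColouring
  split_ifs <;> omega

theorem everyThirdColouring_le_one (hn : 3 ∣ n) (v : Fin n) : everyThirdColouring n v ≤ 1 := by
  unfold everyThirdColouring
  split_ifs <;> omega

theorem exists_mem_closedNbhd_cycleGraph_three_dvd (v : Fin n) :
    ∃ u ∈ closedNbhd (cycleGraph n) v, 3 ∣ (u : ℕ) := by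
  simp only [mem_closedNbhd_cycleGraph_iff_val]
  by_cases one_mod : (v : ℕ) % 3 = 1
  · exact ⟨⟨v - 1, by omega⟩, by dsimp only; omega, by dsimp only; omega⟩
  by_cases two_mod : (v : ℕ) % 3 = 2
  · by_cases last : (v : ℕ) + 1 = n
    · exact ⟨⟨0, by omega⟩, by dsimp only; omega, dvd_zero 3⟩
    · exact ⟨⟨v + 1, by omega⟩, by dsimp only; omega, by dsimp only; omega⟩
  · exact ⟨v, .inl rfl, by omega⟩

theorem isSubsetSquareColouring_everyThirdColouring (n : ℕ) :
    IsSubsetSquareColouring (cycleGraph n) 2 (everyThirdColouring n) := by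
  refine isSubsetSquareColouring_iff.2 ⟨everyThirdColouring_le_two, ?_, ?_⟩
  · simpa only [everyThirdColouring_ne_zero] using exists_mem_closedNbhd_cycleGraph_three_dvd
  · intro v u hu w hw hcu hcuw
    have hcw := hcuw ▸ hcu
    rw [everyThirdColouring_ne_zero] at hcu hcw
    rw [mem_closedNbhd_cycleGraph_iff_val] at hu hw
    have same_side : (u : ℕ) + 2 < n ↔ (w : ℕ) + 2 < n := by
      simp only [everyThirdColouring, if_pos hcu, if_pos hcw] at hcuw
      split_ifs at hcuw <;> omega
    ext
    omega

theorem sscNum_cycleGraph_le_two (n : ℕ) : sscNum (cycleGraph n) ≤ 2 :=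
  (isSubsetSquareColouring_everyThirdColouring n).sscNum_le

theorem sscNum_cycleGraph_le_one (hn : 3 ∣ n) : sscNum (cycleGraph n) ≤ 1 :=
  ((isSubsetSquareColouring_everyThirdColouring n).of_le (everyThirdColouring_le_one hn)).sscNum_le

theorem three_dvd_of_sscNum_cycleGraph_eq_one (hn : 3 ≤ n) (h : sscNum (cycleGraph n) = 1) :
    3 ∣ n := by
  simpa using degree_add_one_dvd_card_of_sscNum_eq_one (isRegularOfDegree_cycleGraph hn) h

end CycleGraph

theorem stmt18 (n : ℕ) (hn : 3 ≤ n) :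
    sscNum (cycleGraph n) = if 3 ∣ n then 1 else 2 := by
  have : NeZero n := ⟨by omega⟩
  have one_le : 1 ≤ sscNum (cycleGraph n) := sscNum_pos _
  split_ifs with three_dvd
  · exact (sscNum_cycleGraph_le_one three_dvd).antisymm one_le
  · have ne_one := mt (three_dvd_of_sscNum_cycleGraph_eq_one hn) three_dvd
    exact (sscNum_cycleGraph_le_two n).antisymm (one_le.lt_of_ne' ne_one)
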